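/- Under the hypotheses of the analogy identity (words w_a, w_{a*}, w_b, w_{b*}; parameter sets W⁺, W⁻ with w_a, w_b ∉ W⁺, w_{a*}, w_{b*} ∉ W⁻; W^x := {w_x} ∪ W⁺ and W^x_* := {w_{x*}} ∪ W⁻ for x ∈ {a,b}), if each of the four words has an embedding with respect to C (Cᵀ.mulVec w⃗_i = PMI_i), then w⃗_{b*} = w⃗_{a*} − w⃗_a + w⃗_b + C†.mulVec( (ρ^{W^b,W^b_*} − ρ^{W^a,W^a_*}) + (σ^{W^b} − σ^{W^b_*}) − (σ^{W^a} − σ^{W^a_*}) − ((τ^{W^b} − τ^{W^b_*}) − (τ^{W^a} − τ^{W^a_*}))·𝟙 ). (Paper's Theorem 3: Analogies.) -/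

import Mathlib

open MeasureTheory Real Finset Matrix

namespace AnalogiesExplained

variable {Ω : Type*}

/-- Conditional probability `p(B ∣ A) = μ(A ∩ B) / μ(A)` (as a real number). -/
noncomputable def condP [MeasurableSpace Ω] (μ : Measure Ω) (A B : Set Ω) : ℝ :=
  (μ (A ∩ B)).toReal / (μ A).toReal

/-- Pointwise mutual information `PMI(A, B) = log (μ(A ∩ B) / (μ(A)·μ(B)))`. -/
noncomputable def PMI [MeasurableSpace Ω] (μ : Measure Ω) (A B : Set Ω) : ℝ :=
  Real.log ((μ (A ∩ B)).toReal / ((μ A).toReal * (μ B).toReal))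

/-- The joint event of a finite word set: `A_W = ⋂ i ∈ W, A i`. -/
def jointEvent {ι : Type*} (A : ι → Set Ω) (W : Finset ι) : Set Ω :=
  ⋂ i ∈ W, A i

/-- Paraphrase error `ρ^{W,W*}_j = log (p(B_j ∣ A_{W*}) / p(B_j ∣ A_W))`. -/
noncomputable def rho [MeasurableSpace Ω] (μ : Measure Ω) (AW AWstar B : Set Ω) : ℝ :=
  Real.log (condP μ AWstar B / condP μ AW B)

/-- Conditional-dependence error `σ^W_j = log (p(A_W ∣ B_j) / ∏_{i ∈ W} p(A_i ∣ B_j))`. -/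
noncomputable def sigma [MeasurableSpace Ω] {ι : Type*} (μ : Measure Ω) (A : ι → Set Ω)
    (W : Finset ι) (B : Set Ω) : ℝ :=
  Real.log (condP μ B (jointEvent A W) / ∏ i ∈ W, condP μ B (A i))

/-- Marginal-dependence error `τ^W = log (μ(A_W) / ∏_{i ∈ W} μ(A_i))`. -/
noncomputable def tau [MeasurableSpace Ω] {ι : Type*} (μ : Measure Ω) (A : ι → Set Ω)
    (W : Finset ι) : ℝ :=
  Real.log ((μ (jointEvent A W)).toReal / ∏ i ∈ W, (μ (A i)).toReal)

/-!
Bayes' rule in logarithmic form is `log p(B ∣ A) = log p(B) + PMI(A, B)`, and comparing a joint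
event with its constituents gives `PMI(A_W, B) = ∑_{i ∈ W} PMI(A_i, B) + σ^W - τ^W`. Since `ρ` is
the difference of the PMIs of two joint events, the PMI sums over `W_*` and `W` differ by a
combination of `ρ`, `σ` and `τ`. Subtracting this identity for the pair `W^a, W^a_*` from the one
for `W^b, W^b_*` cancels the shared words of `W⁺` and `W⁻`, which leaves an identity between the
PMI vectors of the four words; a left inverse of `Cᵀ` carries it over to the embeddings.
-/

open scoped ENNReal

theorem eq_mulVec_of_mulVec_eq {m n R : Type*} [Fintype m] [Fintype n] [DecidableEq n]
    [Semiring R] {L : Matrix n m R} {M : Matrix m n R} {v : n → R} {y : m → R}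
    (hLM : L * M = 1) (h : M *ᵥ v = y) : v = L *ᵥ y := by
  rw [← h, mulVec_mulVec, hLM, one_mulVec]

theorem jointEvent_subset {ι : Type*} {A : ι → Set Ω} {W : Finset ι} {i : ι} (hi : i ∈ W) :
    jointEvent A W ⊆ A i :=
  Set.biInter_subset_of_mem hi

section Measure

variable [MeasurableSpace Ω] {μ : Measure Ω}

section PairOfEvents

variable {A A' B : Set Ω}

theorem condP_ne_zero (hA : μ A ≠ ∞) (hAB : μ (A ∩ B) ≠ 0) : condP μ A B ≠ 0 :=
  div_ne_zero
    (ENNReal.toReal_ne_zero.2 ⟨hAB, measure_ne_top_of_subset Set.inter_subset_left hA⟩)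
    (ENNReal.toReal_ne_zero.2 ⟨mt (measure_mono_null Set.inter_subset_left) hAB, hA⟩)

theorem PMI_comm (μ : Measure Ω) (A B : Set Ω) : PMI μ A B = PMI μ B A := by
  rw [PMI, PMI, Set.inter_comm, mul_comm]

theorem PMI_eq_log_condP_sub_log (hA : μ A ≠ ∞) (hB : μ B ≠ ∞) (hAB : μ (A ∩ B) ≠ 0) :
    PMI μ A B = log (condP μ A B) - log (μ B).toReal := by
  have hB_ne_zero : (μ B).toReal ≠ 0 :=
    ENNReal.toReal_ne_zero.2 ⟨mt (measure_mono_null Set.inter_subset_right) hAB, hB⟩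
  rw [PMI, ← div_div, ← log_div (condP_ne_zero hA hAB) hB_ne_zero, condP]

theorem rho_eq_PMI_sub_PMI (hA : μ A ≠ ∞) (hA' : μ A' ≠ ∞) (hB : μ B ≠ ∞)
    (hAB : μ (A ∩ B) ≠ 0) (hAB' : μ (A' ∩ B) ≠ 0) :
    rho μ A A' B = PMI μ A' B - PMI μ A B := by
  rw [rho, log_div (condP_ne_zero hA' hAB') (condP_ne_zero hA hAB),
    PMI_eq_log_condP_sub_log hA hB hAB, PMI_eq_log_condP_sub_log hA' hB hAB',
    sub_sub_sub_cancel_right]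

end PairOfEvents

section WordSets

variable {ι : Type*} {A : ι → Set Ω} {W W' : Finset ι} {B : Set Ω}

theorem tau_eq_log_sub_sum_log (hA : ∀ i ∈ W, μ (A i) ≠ ∞) (hW : μ (jointEvent A W) ≠ ∞)
    (hW_ne_zero : μ (jointEvent A W) ≠ 0) :
    tau μ A W = log (μ (jointEvent A W)).toReal - ∑ i ∈ W, log (μ (A i)).toReal := by
  have word_ne_zero : ∀ i ∈ W, (μ (A i)).toReal ≠ 0 := fun i hi =>
    ENNReal.toReal_ne_zero.2 ⟨mt (measure_mono_null (jointEvent_subset hi)) hW_ne_zero, hA i hi⟩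
  rw [tau, log_div (ENNReal.toReal_ne_zero.2 ⟨hW_ne_zero, hW⟩) (prod_ne_zero_iff.2 word_ne_zero),
    log_prod word_ne_zero]

theorem sigma_eq_log_sub_sum_log (hB : μ B ≠ ∞) (hWB : μ (B ∩ jointEvent A W) ≠ 0) :
    sigma μ A W B =
      log (condP μ B (jointEvent A W)) - ∑ i ∈ W, log (condP μ B (A i)) := by
  have word_ne_zero : ∀ i ∈ W, condP μ B (A i) ≠ 0 := fun i hi =>
    condP_ne_zero hB
      (mt (measure_mono_null (Set.inter_subset_inter_right B (jointEvent_subset hi))) hWB)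
  rw [sigma, log_div (condP_ne_zero hB hWB) (prod_ne_zero_iff.2 word_ne_zero),
    log_prod word_ne_zero]

theorem PMI_jointEvent (hA : ∀ i ∈ W, μ (A i) ≠ ∞) (hW : μ (jointEvent A W) ≠ ∞)
    (hB : μ B ≠ ∞) (hWB : μ (jointEvent A W ∩ B) ≠ 0) :
    PMI μ (jointEvent A W) B = ∑ i ∈ W, PMI μ (A i) B + sigma μ A W B - tau μ A W := by
  have hBW : μ (B ∩ jointEvent A W) ≠ 0 := by rwa [Set.inter_comm]
  have PMI_word : ∀ i ∈ W,
      PMI μ (A i) B = log (condP μ B (A i)) - log (μ (A i)).toReal := fun i hi => by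
    rw [PMI_comm, PMI_eq_log_condP_sub_log hB (hA i hi)
      (mt (measure_mono_null (Set.inter_subset_inter_right B (jointEvent_subset hi))) hBW)]
  rw [PMI_comm, PMI_eq_log_condP_sub_log hB hW hBW, sum_congr rfl PMI_word, sum_sub_distrib,
    sigma_eq_log_sub_sum_log hB hBW,
    tau_eq_log_sub_sum_log hA hW (mt (measure_mono_null Set.inter_subset_left) hWB)]
  ring

theorem sum_PMI_sub_sum_PMI (hA : ∀ i ∈ W, μ (A i) ≠ ∞) (hA' : ∀ i ∈ W', μ (A i) ≠ ∞)
    (hW : μ (jointEvent A W) ≠ ∞) (hW' : μ (jointEvent A W') ≠ ∞) (hB : μ B ≠ ∞)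
    (hWB : μ (jointEvent A W ∩ B) ≠ 0) (hWB' : μ (jointEvent A W' ∩ B) ≠ 0) :
    ∑ i ∈ W', PMI μ (A i) B - ∑ i ∈ W, PMI μ (A i) B =
      rho μ (jointEvent A W) (jointEvent A W') B + (sigma μ A W B - sigma μ A W' B)
        - (tau μ A W - tau μ A W') := by
  rw [rho_eq_PMI_sub_PMI hW hW' hB hWB hWB', PMI_jointEvent hA hW hB hWB,
    PMI_jointEvent hA' hW' hB hWB']
  ring

theorem PMI_sub_PMI_of_notMem [DecidableEq ι] {x x' : ι} (hx : x ∉ W) (hx' : x' ∉ W')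
    (hA : ∀ i ∈ insert x W, μ (A i) ≠ ∞) (hA' : ∀ i ∈ insert x' W', μ (A i) ≠ ∞)
    (hB : μ B ≠ ∞) (hWB : μ (jointEvent A (insert x W) ∩ B) ≠ 0)
    (hWB' : μ (jointEvent A (insert x' W') ∩ B) ≠ 0) :
    PMI μ (A x') B - PMI μ (A x) B =
      rho μ (jointEvent A (insert x W)) (jointEvent A (insert x' W')) B
        + (sigma μ A (insert x W) B - sigma μ A (insert x' W') B)
        - (tau μ A (insert x W) - tau μ A (insert x' W'))
        + (∑ i ∈ W, PMI μ (A i) B - ∑ i ∈ W', PMI μ (A i) B) := by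
  have jointEvent_ne_top {y : ι} {V : Finset ι} (hV : ∀ i ∈ insert y V, μ (A i) ≠ ∞) :
      μ (jointEvent A (insert y V)) ≠ ∞ :=
    measure_ne_top_of_subset (jointEvent_subset (mem_insert_self y V))
      (hV y (mem_insert_self y V))
  rw [← sum_PMI_sub_sum_PMI hA hA' (jointEvent_ne_top hA) (jointEvent_ne_top hA') hB hWB hWB',
    sum_insert hx, sum_insert hx']
  ring

end WordSets

theorem analogy_embedding_general {ι κ δ : Type*} [DecidableEq ι] [Fintype κ] [Fintype δ]
    [DecidableEq δ] {A : ι → Set Ω} {B : κ → Set Ω} {a astar b bstar : ι} {Wp Wm : Finset ι}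
    (ha : a ∉ Wp) (hb : b ∉ Wp) (has : astar ∉ Wm) (hbs : bstar ∉ Wm)
    (hA : ∀ i ∈ insert a (insert b Wp) ∪ insert astar (insert bstar Wm), μ (A i) ≠ ∞)
    (hB : ∀ j, μ (B j) ≠ ∞)
    (hAWaB : ∀ j, μ (jointEvent A (insert a Wp) ∩ B j) ≠ 0)
    (hAWbB : ∀ j, μ (jointEvent A (insert b Wp) ∩ B j) ≠ 0)
    (hAWasB : ∀ j, μ (jointEvent A (insert astar Wm) ∩ B j) ≠ 0)
    (hAWbsB : ∀ j, μ (jointEvent A (insert bstar Wm) ∩ B j) ≠ 0)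
    {C L : Matrix δ κ ℝ} (hL : L * Cᵀ = 1) {wv : ι → δ → ℝ}
    (hwa : Cᵀ *ᵥ wv a = fun j => PMI μ (A a) (B j))
    (hwas : Cᵀ *ᵥ wv astar = fun j => PMI μ (A astar) (B j))
    (hwb : Cᵀ *ᵥ wv b = fun j => PMI μ (A b) (B j))
    (hwbs : Cᵀ *ᵥ wv bstar = fun j => PMI μ (A bstar) (B j)) :
    wv bstar = wv astar - wv a + wv b
      + L *ᵥ fun j =>
          (rho μ (jointEvent A (insert b Wp)) (jointEvent A (insert bstar Wm)) (B j)
            - rho μ (jointEvent A (insert a Wp)) (jointEvent A (insert astar Wm)) (B j))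
          + (sigma μ A (insert b Wp) (B j) - sigma μ A (insert bstar Wm) (B j))
          - (sigma μ A (insert a Wp) (B j) - sigma μ A (insert astar Wm) (B j))
          - ((tau μ A (insert b Wp) - tau μ A (insert bstar Wm))
              - (tau μ A (insert a Wp) - tau μ A (insert astar Wm))) := by
  refine sub_eq_iff_eq_add'.1 (eq_mulVec_of_mulVec_eq hL (funext fun j => ?_))
  have pair_a := PMI_sub_PMI_of_notMem ha has (fun i hi => hA i (by grind))
    (fun i hi => hA i (by grind)) (hB j) (hAWaB j) (hAWasB j)
  have pair_b := PMI_sub_PMI_of_notMem hb hbs (fun i hi => hA i (by grind))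
    (fun i hi => hA i (by grind)) (hB j) (hAWbB j) (hAWbsB j)
  simp only [mulVec_sub, mulVec_add, hwa, hwas, hwb, hwbs, Pi.sub_apply, Pi.add_apply]
  linear_combination pair_b - pair_a

end Measure

/-- **Theorem 3 (Analogies).** Under the hypotheses of the analogy identity, if each of the four
words has an embedding w.r.t. `C`, then
`w⃗_{b*} = w⃗_{a*} − w⃗_a + w⃗_b + C†((ρ^{W^b,W^b_*} − ρ^{W^a,W^a_*}) + (σ^{W^b} − σ^{W^b_*})
 − (σ^{W^a} − σ^{W^a_*}) − ((τ^{W^b} − τ^{W^b_*}) − (τ^{W^a} − τ^{W^a_*}))·𝟙)`. -/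
theorem analogy_embedding
    [MeasurableSpace Ω] (μ : Measure Ω) [IsProbabilityMeasure μ]
    {ι : Type*} [DecidableEq ι] (A : ι → Set Ω) {n : ℕ} (B : Fin n → Set Ω)
    (a astar b bstar : ι) (Wp Wm : Finset ι)
    (ha : a ∉ Wp) (hb : b ∉ Wp) (has : astar ∉ Wm) (hbs : bstar ∉ Wm)
    (hmA : ∀ i, MeasurableSet (A i)) (hmB : ∀ j, MeasurableSet (B j))
    (hA : ∀ i ∈ insert a (insert b Wp) ∪ insert astar (insert bstar Wm),
      0 < (μ (A i)).toReal)
    (hB : ∀ j, 0 < (μ (B j)).toReal)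
    (hAWa : 0 < (μ (jointEvent A (insert a Wp))).toReal)
    (hAWb : 0 < (μ (jointEvent A (insert b Wp))).toReal)
    (hAWas : 0 < (μ (jointEvent A (insert astar Wm))).toReal)
    (hAWbs : 0 < (μ (jointEvent A (insert bstar Wm))).toReal)
    (hAB : ∀ i ∈ insert a (insert b Wp) ∪ insert astar (insert bstar Wm),
      ∀ j, 0 < (μ (A i ∩ B j)).toReal)
    (hAWaB : ∀ j, 0 < (μ (jointEvent A (insert a Wp) ∩ B j)).toReal)
    (hAWbB : ∀ j, 0 < (μ (jointEvent A (insert b Wp) ∩ B j)).toReal)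
    (hAWasB : ∀ j, 0 < (μ (jointEvent A (insert astar Wm) ∩ B j)).toReal)
    (hAWbsB : ∀ j, 0 < (μ (jointEvent A (insert bstar Wm) ∩ B j)).toReal)
    {d : ℕ} (C : Matrix (Fin d) (Fin n) ℝ)
    (hC : IsUnit (C * C.transpose))
    (wv : ι → Fin d → ℝ)
    (hwa : C.transpose.mulVec (wv a) = fun j => PMI μ (A a) (B j))
    (hwas : C.transpose.mulVec (wv astar) = fun j => PMI μ (A astar) (B j))
    (hwb : C.transpose.mulVec (wv b) = fun j => PMI μ (A b) (B j))
    (hwbs : C.transpose.mulVec (wv bstar) = fun j => PMI μ (A bstar) (B j)) :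
    wv bstar = wv astar - wv a + wv b
      + ((C * C.transpose)⁻¹ * C).mulVec
          (fun j =>
            (rho μ (jointEvent A (insert b Wp)) (jointEvent A (insert bstar Wm)) (B j)
              - rho μ (jointEvent A (insert a Wp)) (jointEvent A (insert astar Wm)) (B j))
            + (sigma μ A (insert b Wp) (B j) - sigma μ A (insert bstar Wm) (B j))
            - (sigma μ A (insert a Wp) (B j) - sigma μ A (insert astar Wm) (B j))
            - ((tau μ A (insert b Wp) - tau μ A (insert bstar Wm))
                - (tau μ A (insert a Wp) - tau μ A (insert astar Wm)))) := by
  have ne_zero {s : Set Ω} (hs : 0 < (μ s).toReal) : μ s ≠ 0 := (ENNReal.toReal_pos_iff.1 hs).1.ne'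
  exact analogy_embedding_general ha hb has hbs (fun _ _ => measure_ne_top μ _)
    (fun _ => measure_ne_top μ _) (fun j => ne_zero (hAWaB j)) (fun j => ne_zero (hAWbB j))
    (fun j => ne_zero (hAWasB j)) (fun j => ne_zero (hAWbsB j))
    (by rw [Matrix.mul_assoc, nonsing_inv_mul _ ((isUnit_iff_isUnit_det _).1 hC)])
    hwa hwas hwb hwbs

end AnalogiesExplained
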